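/- Suppose F : D × 𝕏 → 𝕐 and F̄ : D × 𝕏 → 𝕐̄ are continuous, uniformly Lipschitz in 𝕏, and smooth (infinitely Fréchet differentiable) in all variables, and suppose the initial data U₀ : [0,ū_*] → 𝕐 and Ū₀ : [0,u_*] → 𝕐̄ are smooth. Then the unique solution (U,Ū) of the two-variable ODE system with data (F, F̄, U₀, Ū₀) belongs to C^∞(D; 𝕏): every iterated partial derivative of U and of Ū (of any order, in u and ū) exists and is continuous on D. -/

import Mathlib

open Set

/-- The domain `D = [0,u_*] × [0,ū_*] ⊆ ℝ²`. -/
def Dset (us ubs : ℝ) : Set (ℝ × ℝ) := Set.Icc 0 us ×ˢ Set.Icc 0 ubs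

/-- `(U, Ū)` solves the two-variable ODE system with data `(F, F̄, U₀, Ū₀)` on `D`. -/
def IsSolution {Y Yb : Type*} [NormedAddCommGroup Y] [NormedSpace ℝ Y]
    [NormedAddCommGroup Yb] [NormedSpace ℝ Yb]
    (us ubs : ℝ)
    (F : ℝ → ℝ → Y × Yb → Y) (Fb : ℝ → ℝ → Y × Yb → Yb)
    (U₀ : ℝ → Y) (Ub₀ : ℝ → Yb)
    (U : ℝ × ℝ → Y) (Ub : ℝ × ℝ → Yb) : Prop :=
  ContinuousOn U (Dset us ubs) ∧ ContinuousOn Ub (Dset us ubs) ∧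
  (∀ p ∈ Dset us ubs,
    HasDerivWithinAt (fun t => U (t, p.2)) (F p.1 p.2 (U p, Ub p)) (Set.Icc 0 us) p.1) ∧
  (∀ p ∈ Dset us ubs,
    HasDerivWithinAt (fun v => Ub (p.1, v)) (Fb p.1 p.2 (U p, Ub p)) (Set.Icc 0 ubs) p.2) ∧
  (∀ ub ∈ Set.Icc (0:ℝ) ubs, U (0, ub) = U₀ ub) ∧
  (∀ u ∈ Set.Icc (0:ℝ) us, Ub (u, 0) = Ub₀ u)

/-!
In each equation the unknown solves an ordinary differential equation in one variable, with the
other variable `v` as a parameter and the other unknown as a coefficient. For such a family `U`,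
the divided difference `(U (t, w) - U (t, v)) / (w - v)` solves a linear equation in `t` whose
coefficients are averages of the derivative of the right-hand side along the segment joining the
two states (Hadamard's lemma). These averages make sense, and are continuous, also for `w = v`, so
the linear equation has a solution continuous in `(t, v, w)`; by uniqueness it extends the divided
difference to the diagonal. Hence `∂U/∂v` exists, is continuous and solves the linearized equation,
a family of the same kind, and induction gives regularity of every order. For the system, the
equation of each unknown provides the derivative of that unknown which the linearization of the
other equation needs, so both unknowns gain one order of regularity at a time.
-/

section LipschitzODE

variable {E : Type*} [NormedAddCommGroup E] [NormedSpace ℝ E] {g : ℝ → E → E} {K : NNReal}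

theorem norm_picard_sub_picard_le_exp (hg : Continuous ↿g) (hgK : ∀ t, LipschitzWith K (g t))
    (x₀ : E) {α β : ℝ → E} (hα : Continuous α) (hβ : Continuous β) {rate C : ℝ} (hrate : 0 < rate)
    (hC : 0 ≤ C) (hαβ : ∀ s, ‖α s - β s‖ ≤ C * Real.exp (rate * s)) {t : ℝ} (ht : 0 ≤ t) :
    ‖ODE.picard g 0 x₀ α t - ODE.picard g 0 x₀ β t‖ ≤ K / rate * C * Real.exp (rate * t) := by
  have hgα : Continuous fun s => g s (α s) := hg.comp (continuous_id.prodMk hα)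
  have hgβ : Continuous fun s => g s (β s) := hg.comp (continuous_id.prodMk hβ)
  have hprimitive (s : ℝ) : HasDerivAt (fun s => K / rate * C * Real.exp (rate * s))
      (K * (C * Real.exp (rate * s))) s := by
    refine ((((hasDerivAt_id s).const_mul rate).exp).const_mul _).congr_deriv ?_
    simp only [id]
    field_simp
  calc ‖ODE.picard g 0 x₀ α t - ODE.picard g 0 x₀ β t‖
      = ‖∫ s in (0 : ℝ)..t, (g s (α s) - g s (β s))‖ := by
        rw [ODE.picard_apply, ODE.picard_apply, add_sub_add_left_eq_sub,
          intervalIntegral.integral_sub (hgα.intervalIntegrable _ _) (hgβ.intervalIntegrable _ _)]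
    _ ≤ ∫ s in (0 : ℝ)..t, K * (C * Real.exp (rate * s)) := by
        refine intervalIntegral.norm_integral_le_of_norm_le ht (.of_forall fun s _ => ?_)
          (Continuous.intervalIntegrable (by fun_prop) _ _)
        exact ((hgK s).norm_sub_le _ _).trans (by gcongr; exact hαβ s)
    _ = K / rate * C * Real.exp (rate * t) - K / rate * C * Real.exp (rate * 0) :=
        intervalIntegral.integral_eq_sub_of_hasDerivAt (fun s _ => hprimitive s)
          (Continuous.intervalIntegrable (by fun_prop) _ _)
    _ ≤ K / rate * C * Real.exp (rate * t) := sub_le_self _ (by positivity)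

/-- The curve on `ℝ` that `W` represents in the weighted picture: constant extension of `W` beyond
`[0, T]`, multiplied by the exponential weight. -/
noncomputable def expWeight {T : ℝ} (hT : 0 ≤ T) (rate : ℝ) (W : C(Icc 0 T, E)) (t : ℝ) : E :=
  Real.exp (rate * t) • W (projIcc 0 T hT t)

theorem continuous_expWeight {T : ℝ} (hT : 0 ≤ T) (rate : ℝ) (W : C(Icc 0 T, E)) :
    Continuous (expWeight hT rate W) :=
  Continuous.smul (by fun_prop) (W.continuous.comp continuous_projIcc)

theorem norm_expWeight_sub_le {T : ℝ} (hT : 0 ≤ T) (rate : ℝ) (W W' : C(Icc 0 T, E)) (t : ℝ) :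
    ‖expWeight hT rate W t - expWeight hT rate W' t‖ ≤ dist W W' * Real.exp (rate * t) := by
  rw [expWeight, expWeight, ← smul_sub, norm_smul, Real.norm_eq_abs, Real.abs_exp, mul_comm,
    ← dist_eq_norm]
  gcongr
  exact ContinuousMap.dist_apply_le_dist _

/-- Picard iteration for `x' = g(t, x)`, `x(0) = x₀` on `[0, T]`, acting on curves divided by the
weight `exp (rate * t)`. For a large rate it contracts the uniform norm, whatever `T` is. -/
noncomputable def weightedPicard {T : ℝ} (hT : 0 ≤ T) (rate : ℝ) (hg : Continuous ↿g) (x₀ : E)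
    (W : C(Icc 0 T, E)) : C(Icc 0 T, E) where
  toFun t := Real.exp (-(rate * t)) • ODE.picard g 0 x₀ (expWeight hT rate W) t
  continuous_toFun := by
    have hgW : Continuous fun s => g s (expWeight hT rate W s) :=
      hg.comp (continuous_id.prodMk (continuous_expWeight hT rate W))
    have hpicard : Continuous (ODE.picard g 0 x₀ (expWeight hT rate W)) :=
      continuous_const.add (intervalIntegral.continuous_primitive
        (fun a b => hgW.intervalIntegrable a b) 0)
    fun_prop

theorem contractingWith_weightedPicard {T : ℝ} (hT : 0 ≤ T) (hg : Continuous ↿g)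
    (hgK : ∀ t, LipschitzWith K (g t)) (x₀ : E) :
    ContractingWith (1 / 2) (weightedPicard hT (2 * K + 1) hg x₀) := by
  refine ⟨by norm_num, LipschitzWith.of_dist_le_mul fun W W' => ?_⟩
  rw [ContinuousMap.dist_le (by positivity)]
  intro t
  set rate : ℝ := 2 * K + 1
  have hpicard := norm_picard_sub_picard_le_exp hg hgK x₀ (continuous_expWeight hT rate W)
    (continuous_expWeight hT rate W') (by positivity) dist_nonneg
    (norm_expWeight_sub_le hT rate W W') t.2.1
  have hratio : K / rate ≤ 1 / 2 := by
    rw [div_le_div_iff₀ (by positivity) two_pos]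
    linarith
  calc dist (weightedPicard hT rate hg x₀ W t) (weightedPicard hT rate hg x₀ W' t)
      = Real.exp (-(rate * t)) * ‖ODE.picard g 0 x₀ (expWeight hT rate W) t
          - ODE.picard g 0 x₀ (expWeight hT rate W') t‖ := by
        simp only [weightedPicard, ContinuousMap.coe_mk, dist_eq_norm, ← smul_sub, norm_smul,
          Real.norm_eq_abs, Real.abs_exp]
    _ ≤ Real.exp (-(rate * t)) * (K / rate * dist W W' * Real.exp (rate * t)) := by gcongr
    _ = K / rate * dist W W' := by
        rw [Real.exp_neg]
        field_simp
    _ ≤ (1 / 2 : NNReal) * dist W W' := by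
        push_cast
        gcongr

theorem exists_hasDerivWithinAt_of_lipschitzWith [CompleteSpace E] {T : ℝ} (hT : 0 ≤ T)
    (hg : Continuous ↿g) (hgK : ∀ t, LipschitzWith K (g t)) (x₀ : E) :
    ∃ x : ℝ → E, Continuous x ∧ x 0 = x₀ ∧
      ∀ t ∈ Icc 0 T, HasDerivWithinAt x (g t (x t)) (Icc 0 T) t := by
  obtain ⟨W, hW⟩ : ∃ W, weightedPicard hT (2 * K + 1) hg x₀ W = W :=
    ⟨_, (contractingWith_weightedPicard hT hg hgK x₀).fixedPoint_isFixedPt⟩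
  set x := expWeight hT (2 * K + 1) W with hx
  have hxc : Continuous x := continuous_expWeight hT _ W
  have hpicard : ∀ t ∈ Icc 0 T, x t = ODE.picard g 0 x₀ x t := by
    intro t ht
    have hWt : W ⟨t, ht⟩ = Real.exp (-((2 * K + 1) * t)) • ODE.picard g 0 x₀ x t :=
      (DFunLike.congr_fun hW _).symm
    rw [hx, expWeight, projIcc_of_mem hT ht, hWt, smul_smul, ← Real.exp_add, add_neg_cancel,
      Real.exp_zero, one_smul]
  have h0 : (0 : ℝ) ∈ Icc 0 T := left_mem_Icc.2 hT
  refine ⟨x, hxc, by rw [hpicard 0 h0, ODE.picard_apply₀], fun t ht => ?_⟩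
  exact (ODE.hasDerivWithinAt_picard_Icc h0 hg.continuousOn hxc.continuousOn
    (fun _ _ => mem_univ _) x₀ ht).congr hpicard (hpicard t ht)

end LipschitzODE

section LinearODE

variable {Y : Type*} [NormedAddCommGroup Y] [NormedSpace ℝ Y]

/-- The affine vector field `x ↦ A x + b` on the Banach space of continuous functions of a
parameter: a family of linear equations becomes one equation in `C(P, Y)`. -/
noncomputable def affineField {P : Type*} [TopologicalSpace P] (A : C(P, Y →L[ℝ] Y))
    (b x : C(P, Y)) : C(P, Y) where
  toFun p := A p (x p) + b p

theorem lipschitzWith_affineField {P : Type*} [TopologicalSpace P] [CompactSpace P]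
    {A : C(P, Y →L[ℝ] Y)} (b : C(P, Y)) {L : NNReal} (hL : ∀ p, ‖A p‖ ≤ L) :
    LipschitzWith L (affineField A b) := by
  refine LipschitzWith.of_dist_le_mul fun x x' => ?_
  rw [ContinuousMap.dist_le (by positivity)]
  intro p
  calc dist (A p (x p) + b p) (A p (x' p) + b p) = ‖A p (x p - x' p)‖ := by
        rw [dist_add_right, dist_eq_norm, map_sub]
    _ ≤ ‖A p‖ * ‖x p - x' p‖ := (A p).le_opNorm _
    _ ≤ L * dist x x' := by
        rw [← dist_eq_norm]
        gcongr
        exacts [hL p, ContinuousMap.dist_apply_le_dist p]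

theorem exists_continuous_hasDerivWithinAt_linear [CompleteSpace Y] {P : Type*}
    [TopologicalSpace P] [CompactSpace P] {T : ℝ} (hT : 0 ≤ T) (A : C(ℝ × P, Y →L[ℝ] Y))
    (b : C(ℝ × P, Y)) (c : C(P, Y)) {L : ℝ} (hL : ∀ q, ‖A q‖ ≤ L) :
    ∃ V : ℝ × P → Y, Continuous V ∧ (∀ p, V (0, p) = c p) ∧ ∀ p, ∀ t ∈ Icc 0 T,
      HasDerivWithinAt (fun s => V (s, p)) (A (t, p) (V (t, p)) + b (t, p)) (Icc 0 T) t := by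
  have hfield : Continuous fun q : ℝ × C(P, Y) => affineField (A.curry q.1) (b.curry q.1) q.2 :=
    ContinuousMap.continuous_of_continuous_uncurry _ (by
      simp only [affineField, ContinuousMap.coe_mk, Function.uncurry_def, ContinuousMap.curry_apply]
      fun_prop)
  obtain ⟨x, hxc, hx0, hx⟩ := exists_hasDerivWithinAt_of_lipschitzWith
    (g := fun t => affineField (A.curry t) (b.curry t)) (K := L.toNNReal) hT hfield
    (fun t => lipschitzWith_affineField _ fun p => (hL (t, p)).trans (Real.le_coe_toNNReal L)) c
  refine ⟨fun q => x q.1 q.2, by fun_prop, DFunLike.congr_fun hx0, fun p t ht => ?_⟩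
  exact (ContinuousMap.evalCLM ℝ p).hasFDerivAt.comp_hasDerivWithinAt t (hx t ht)

theorem exists_continuousOn_hasDerivWithinAt_linear [CompleteSpace Y] {P : Type*}
    [TopologicalSpace P] {K : Set P} (hK : IsCompact K) {T : ℝ} (hT : 0 ≤ T)
    {A : ℝ × P → Y →L[ℝ] Y} {b : ℝ × P → Y} {c : P → Y} (hA : ContinuousOn A (Icc 0 T ×ˢ K))
    (hb : ContinuousOn b (Icc 0 T ×ˢ K)) (hc : ContinuousOn c K) :
    ∃ V : ℝ × P → Y, ContinuousOn V (Icc 0 T ×ˢ K) ∧ (∀ p ∈ K, V (0, p) = c p) ∧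
      ∀ p ∈ K, ∀ t ∈ Icc 0 T,
        HasDerivWithinAt (fun s => V (s, p)) (A (t, p) (V (t, p)) + b (t, p)) (Icc 0 T) t := by
  have : CompactSpace K := isCompact_iff_compactSpace.1 hK
  let clamp (q : ℝ × K) : ℝ × P := (projIcc 0 T hT q.1, q.2)
  have hclamp : Continuous clamp := by fun_prop
  have hclamp_mem (q) : clamp q ∈ Icc 0 T ×ˢ K := ⟨Subtype.coe_prop _, q.2.2⟩
  obtain ⟨L, hL⟩ := (isCompact_Icc.prod hK).exists_bound_of_continuousOn hA
  obtain ⟨x, hxc, hx0, hx⟩ := exists_continuous_hasDerivWithinAt_linear hT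
    ⟨A ∘ clamp, hA.comp_continuous hclamp hclamp_mem⟩
    ⟨b ∘ clamp, hb.comp_continuous hclamp hclamp_mem⟩
    ⟨K.domRestrict c, hc.domRestrict⟩ (fun q => hL _ (hclamp_mem q))
  classical
  let V (q : ℝ × P) : Y := if hq : q.2 ∈ K then x (q.1, ⟨q.2, hq⟩) else 0
  have hV (t : ℝ) (p : K) : V (t, p) = x (t, p) := dif_pos p.2
  refine ⟨V, ?_, fun p hp => (hV 0 ⟨p, hp⟩).trans (hx0 _), fun p hp t ht => ?_⟩
  · rw [continuousOn_iff_continuous_domRestrict]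
    have hxK : Continuous fun q : Icc 0 T ×ˢ K => x (q.1.1, ⟨q.1.2, q.2.2⟩) := by fun_prop
    exact hxK.congr fun q => (hV q.1.1 ⟨q.1.2, q.2.2⟩).symm
  · have hclamp_eq : clamp (t, ⟨p, hp⟩) = (t, p) := by
      simp only [clamp, projIcc_of_mem hT ht]
    have hderiv := hx ⟨p, hp⟩ t ht
    simp only [ContinuousMap.coe_mk, Function.comp_apply, hclamp_eq, ← hV] at hderiv
    exact hderiv

theorem eqOn_of_hasDerivWithinAt_linear {T : ℝ} {A : ℝ → Y →L[ℝ] Y} {b : ℝ → Y}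
    (hA : ContinuousOn A (Icc 0 T)) {x y : ℝ → Y}
    (hx : ∀ t ∈ Icc 0 T, HasDerivWithinAt x (A t (x t) + b t) (Icc 0 T) t)
    (hy : ∀ t ∈ Icc 0 T, HasDerivWithinAt y (A t (y t) + b t) (Icc 0 T) t) (h0 : x 0 = y 0) :
    EqOn x y (Icc 0 T) := by
  obtain ⟨L, hL⟩ := isCompact_Icc.exists_bound_of_continuousOn hA
  have hlip : ∀ t ∈ Ico 0 T, LipschitzOnWith L.toNNReal (fun z => A t z + b t) univ := by
    intro t ht
    refine LipschitzWith.lipschitzOnWith (LipschitzWith.of_dist_le_mul fun z z' => ?_)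
    rw [dist_add_right, dist_eq_norm, dist_eq_norm, ← map_sub]
    exact (A t).le_of_opNorm_le ((hL t (Ico_subset_Icc_self ht)).trans (Real.le_coe_toNNReal L)) _
  have hright {z : ℝ → Y} (hz : ∀ t ∈ Icc 0 T, HasDerivWithinAt z (A t (z t) + b t) (Icc 0 T) t) :
      ∀ t ∈ Ico 0 T, HasDerivWithinAt z (A t (z t) + b t) (Ici t) t := fun t ht =>
    (hz t (Ico_subset_Icc_self ht)).mono_of_mem_nhdsWithin
      (Filter.mem_of_superset (Icc_mem_nhdsGE ht.2) (Icc_subset_Icc_left ht.1))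
  exact ODE_solution_unique_of_mem_Icc_right hlip
    (fun t ht => (hx t ht).continuousWithinAt) (hright hx) (fun _ _ => mem_univ _)
    (fun t ht => (hy t ht).continuousWithinAt) (hright hy) (fun _ _ => mem_univ _) h0

end LinearODE

section SegmentAverage

variable {E G : Type*} [NormedAddCommGroup E] [NormedSpace ℝ E] [NormedAddCommGroup G]
  [NormedSpace ℝ G]

/-- The mean value of `f` over the segment from `x` to `y`, parametrized affinely. Averaging a
derivative this way gives Hadamard's divided difference. -/
noncomputable def segmentAverage (f : E → G) (x y : E) : G :=
  ∫ θ in (0 : ℝ)..1, f (AffineMap.lineMap x y θ)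

theorem segmentAverage_self [CompleteSpace G] (f : E → G) (x : E) : segmentAverage f x x = f x := by
  simp [segmentAverage]

theorem continuousOn_segmentAverage {s : Set E} (hs : Convex ℝ s) {f : E → G}
    (hf : ContinuousOn f s) :
    ContinuousOn (fun q : E × E => segmentAverage f q.1 q.2) (s ×ˢ s) := by
  have hclamp : ∀ θ ∈ uIcc (0 : ℝ) 1, (projIcc (0 : ℝ) 1 zero_le_one θ : ℝ) = θ := fun θ hθ => by
    rw [projIcc_of_mem zero_le_one (by rwa [uIcc_of_le zero_le_one] at hθ)]
  have hline : Continuous fun z : (s ×ˢ s) × ℝ =>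
      (AffineMap.lineMap z.1.1.1 z.1.1.2 (projIcc (0 : ℝ) 1 zero_le_one z.2 : ℝ) : E) := by
    simp only [AffineMap.lineMap_apply_module']
    fun_prop
  have hintegrand := hf.comp_continuous hline fun z =>
    hs.lineMap_mem z.1.2.1 z.1.2.2 (Subtype.coe_prop _)
  rw [continuousOn_iff_continuous_domRestrict]
  refine (intervalIntegral.continuous_parametric_intervalIntegral_of_continuous'
    (μ := MeasureTheory.volume) (f := fun (q : s ×ˢ s) θ => f (AffineMap.lineMap q.1.1 q.1.2
      (projIcc (0 : ℝ) 1 zero_le_one θ : ℝ))) hintegrand 0 1).congr fun q => ?_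
  exact intervalIntegral.integral_congr fun θ hθ => by simp only [hclamp θ hθ]

theorem image_sub_eq_segmentAverage_apply {Y : Type*} [NormedAddCommGroup Y]
    [NormedSpace ℝ Y] [CompleteSpace Y] {s : Set E} (hs : Convex ℝ s) {f : E → Y}
    {f' : E → E →L[ℝ] Y} (hf : ∀ x ∈ s, HasFDerivWithinAt f (f' x) s x) (hf' : ContinuousOn f' s)
    {x y : E} (hx : x ∈ s) (hy : y ∈ s) : f y - f x = segmentAverage f' x y (y - x) := by
  have hmaps : MapsTo (AffineMap.lineMap x y : ℝ → E) (Icc 0 1) s :=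
    fun θ hθ => hs.lineMap_mem hx hy hθ
  have hderiv : ∀ θ ∈ Icc (0 : ℝ) 1, HasDerivWithinAt (fun θ => f (AffineMap.lineMap x y θ))
      (f' (AffineMap.lineMap x y θ) (y - x)) (Icc 0 1) θ := fun θ hθ =>
    (hf _ (hmaps hθ)).comp_hasDerivWithinAt θ AffineMap.hasDerivWithinAt_lineMap hmaps
  have hcont : ContinuousOn (fun θ : ℝ => f' (AffineMap.lineMap x y θ)) (Icc 0 1) :=
    hf'.comp (AffineMap.lineMap_continuous.continuousOn) hmaps
  have hftc := intervalIntegral.integral_eq_sub_of_hasDerivAt_of_le zero_le_one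
    (fun θ hθ => (hderiv θ hθ).continuousWithinAt)
    (fun θ hθ => (hderiv θ (Ioo_subset_Icc_self hθ)).hasDerivAt (Icc_mem_nhds hθ.1 hθ.2))
    ((hcont.clm_apply continuousOn_const).intervalIntegrable_of_Icc zero_le_one)
  rw [AffineMap.lineMap_apply_one, AffineMap.lineMap_apply_zero] at hftc
  rw [← hftc, segmentAverage, ContinuousLinearMap.intervalIntegral_apply
    (hcont.intervalIntegrable_of_Icc zero_le_one)]

end SegmentAverage

theorem hasDerivWithinAt_of_sub_eq_smul {E : Type*} [NormedAddCommGroup E] [NormedSpace ℝ E]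
    {f φ : ℝ → E} {s : Set ℝ} {v : ℝ} (hf : ∀ w ∈ s, f w - f v = (w - v) • φ w)
    (hφ : ContinuousWithinAt φ s v) : HasDerivWithinAt f (φ v) s v := by
  rw [hasDerivWithinAt_iff_tendsto_slope]
  refine (hφ.mono sdiff_subset).tendsto.congr' ?_
  filter_upwards [self_mem_nhdsWithin] with w hw
  rw [slope_def_module, hf w hw.1, inv_smul_smul₀ (sub_ne_zero.2 hw.2)]

theorem hasFDerivWithinAt_of_partial {E₁ E₂ G : Type*} [NormedAddCommGroup E₁] [NormedSpace ℝ E₁]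
    [NormedAddCommGroup E₂] [NormedSpace ℝ E₂] [NormedAddCommGroup G] [NormedSpace ℝ G]
    {f : E₁ × E₂ → G} {s : Set E₁} {t : Set E₂} (ht : Convex ℝ t) {p : E₁ × E₂} (hp : p.2 ∈ t)
    {f₁ : E₁ →L[ℝ] G} (hf₁ : HasFDerivWithinAt (fun x => f (x, p.2)) f₁ s p.1)
    {f₂ : E₁ × E₂ → E₂ →L[ℝ] G}
    (hf₂ : ∀ q ∈ s ×ˢ t, HasFDerivWithinAt (fun y => f (q.1, y)) (f₂ q) t q.2)
    (hf₂p : ContinuousWithinAt f₂ (s ×ˢ t) p) :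
    HasFDerivWithinAt f (f₁.coprod (f₂ p)) (s ×ˢ t) p := by
  have hfst : (fun q : E₁ × E₂ => f (q.1, p.2) - f p - f₁ (q.1 - p.1))
      =o[nhdsWithin p (s ×ˢ t)] fun q => q - p := by
    refine (hf₁.isLittleO.comp_tendsto (continuousWithinAt_fst.tendsto_nhdsWithin
      fun q hq => hq.1)).trans_isBigO (.of_bound 1 (.of_forall fun q => ?_))
    rw [one_mul]
    exact norm_fst_le (q - p)
  have hsnd : (fun q : E₁ × E₂ => f q - f (q.1, p.2) - f₂ p (q.2 - p.2))
      =o[nhdsWithin p (s ×ˢ t)] fun q => q - p := by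
    refine Asymptotics.isLittleO_iff.2 fun ε hε => ?_
    obtain ⟨δ, hδ, hball⟩ := Metric.continuousWithinAt_iff.1 hf₂p ε hε
    filter_upwards [self_mem_nhdsWithin, mem_nhdsWithin_of_mem_nhds (Metric.ball_mem_nhds p hδ)]
      with q hq hqδ
    rw [← ball_prod_same] at hqδ
    have hbound : ∀ y ∈ t ∩ Metric.ball p.2 δ, ‖f₂ (q.1, y) - f₂ p‖ ≤ ε := fun y hy => by
      rw [← dist_eq_norm]
      exact (hball (x := (q.1, y)) ⟨hq.1, hy.1⟩ (max_lt hqδ.1 hy.2)).le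
    have hmvt := (ht.inter (convex_ball p.2 δ)).norm_image_sub_le_of_norm_hasFDerivWithin_le'
      (f := fun y => f (q.1, y)) (fun y hy => (hf₂ (q.1, y) ⟨hq.1, hy.1⟩).mono inter_subset_left)
      hbound ⟨hp, Metric.mem_ball_self hδ⟩ ⟨hq.2, hqδ.2⟩
    exact hmvt.trans (by gcongr; exact norm_snd_le (q - p))
  refine .of_isLittleO ((hfst.add hsnd).congr_left fun q => ?_)
  simp only [ContinuousLinearMap.coprod_apply, Prod.fst_sub, Prod.snd_sub]
  abel

section ParametricODE

variable {Y : Type*} [NormedAddCommGroup Y] [NormedSpace ℝ Y] {us ubs : ℝ}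
  {G : (ℝ × ℝ) × Y → Y} {G' : (ℝ × ℝ) × Y → ℝ × Y →L[ℝ] Y} {U₀ : ℝ → Y} {U : ℝ × ℝ → Y}

/-- `U` is a continuous family of solutions `u ↦ U (u, v)` of the ordinary differential equation
`∂U/∂u = G ((u, v), U)` on `[0, us]` with initial value `U₀ v`, where `v` ranges over
`[0, ubs]`. -/
structure IsParametricSolution (us ubs : ℝ) (G : (ℝ × ℝ) × Y → Y) (U₀ : ℝ → Y) (U : ℝ × ℝ → Y) :
    Prop where
  continuousOn : ContinuousOn U (Dset us ubs)
  hasDerivWithinAt : ∀ p ∈ Dset us ubs,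
    HasDerivWithinAt (fun t => U (t, p.2)) (G (p, U p)) (Icc 0 us) p.1
  initial : ∀ v ∈ Icc 0 ubs, U (0, v) = U₀ v

/-- `G'` is the Fréchet derivative of `G` in the parameter `v` and the unknown `y`, with `u` frozen:
nothing is asked of the dependence of `G ((u, v), y)` on `u`. -/
def HasParametricFDerivOn {Z : Type*} [NormedAddCommGroup Z] [NormedSpace ℝ Z] (us ubs : ℝ)
    (G : (ℝ × ℝ) × Y → Z) (G' : (ℝ × ℝ) × Y → ℝ × Y →L[ℝ] Z) : Prop :=
  ∀ p ∈ Dset us ubs, ∀ y, HasFDerivWithinAt (fun z : ℝ × Y => G ((p.1, z.1), z.2)) (G' (p, y))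
    (Icc 0 ubs ×ˢ univ) (p.2, y)

/-- The average of the derivative `G'` along the segment joining the states of the solutions with
parameters `v` and `w` at time `t`, as a function of `(t, (v, w))`. -/
noncomputable def meanFDeriv (G' : (ℝ × ℝ) × Y → ℝ × Y →L[ℝ] Y) (U : ℝ × ℝ → Y)
    (q : ℝ × ℝ × ℝ) : ℝ × Y →L[ℝ] Y :=
  segmentAverage G' ((q.1, q.2.1), U (q.1, q.2.1)) ((q.1, q.2.2), U (q.1, q.2.2))

theorem convex_Dset : Convex ℝ (Dset us ubs) := (convex_Icc _ _).prod (convex_Icc _ _)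

theorem continuousOn_meanFDeriv (hG' : ContinuousOn G' (Dset us ubs ×ˢ univ))
    (hU : ContinuousOn U (Dset us ubs)) :
    ContinuousOn (meanFDeriv G' U) (Icc 0 us ×ˢ Icc 0 ubs ×ˢ Icc 0 ubs) := by
  let state (p : ℝ × ℝ) : (ℝ × ℝ) × Y := (p, U p)
  have hstate : ContinuousOn state (Dset us ubs) := continuousOn_id.prodMk hU
  have hleft : ContinuousOn (fun q : ℝ × ℝ × ℝ => state (q.1, q.2.1))
      (Icc 0 us ×ˢ Icc 0 ubs ×ˢ Icc 0 ubs) :=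
    hstate.comp (by fun_prop) fun q hq => ⟨hq.1, hq.2.1⟩
  have hright : ContinuousOn (fun q : ℝ × ℝ × ℝ => state (q.1, q.2.2))
      (Icc 0 us ×ˢ Icc 0 ubs ×ˢ Icc 0 ubs) :=
    hstate.comp (by fun_prop) fun q hq => ⟨hq.1, hq.2.2⟩
  have haverage := continuousOn_segmentAverage (convex_Dset.prod convex_univ) hG'
  have hcomp := haverage.comp (hleft.prodMk hright)
    fun q hq => ⟨⟨⟨hq.1, hq.2.1⟩, mem_univ _⟩, ⟨⟨hq.1, hq.2.2⟩, mem_univ _⟩⟩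
  exact hcomp

variable [CompleteSpace Y]

theorem meanFDeriv_self (t v : ℝ) : meanFDeriv G' U (t, v, v) = G' ((t, v), U (t, v)) :=
  segmentAverage_self G' _

theorem HasParametricFDerivOn.sub_eq_meanFDeriv_apply (hG : HasParametricFDerivOn us ubs G G')
    (hG' : ContinuousOn G' (Dset us ubs ×ˢ univ)) {t v w : ℝ} (ht : t ∈ Icc 0 us)
    (hv : v ∈ Icc 0 ubs) (hw : w ∈ Icc 0 ubs) :
    G ((t, w), U (t, w)) - G ((t, v), U (t, v))
      = meanFDeriv G' U (t, v, w) (w - v, U (t, w) - U (t, v)) := by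
  have hG't : ContinuousOn (fun z : ℝ × Y => G' ((t, z.1), z.2)) (Icc 0 ubs ×ˢ univ) :=
    hG'.comp (by fun_prop) fun z hz => ⟨⟨ht, hz.1⟩, mem_univ _⟩
  have hline (θ : ℝ) : AffineMap.lineMap ((t, v), U (t, v)) ((t, w), U (t, w)) θ
      = ((t, AffineMap.lineMap v w θ), AffineMap.lineMap (U (t, v)) (U (t, w)) θ) := by
    simp [AffineMap.lineMap_apply_module']
  rw [image_sub_eq_segmentAverage_apply (f := fun z : ℝ × Y => G ((t, z.1), z.2))
    ((convex_Icc 0 ubs).prod convex_univ) (fun z hz => hG (t, z.1) ⟨ht, hz.1⟩ z.2) hG't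
    (x := (v, U (t, v))) (y := (w, U (t, w))) ⟨hv, mem_univ _⟩ ⟨hw, mem_univ _⟩]
  simp only [meanFDeriv, segmentAverage, hline]
  simp [AffineMap.lineMap_apply_module']

theorem exists_dividedDifference (hus : 0 ≤ us) (hubs : 0 < ubs)
    (hU : ContinuousOn U (Dset us ubs)) (hG' : ContinuousOn G' (Dset us ubs ×ˢ univ))
    (hU₀ : ContDiffOn ℝ 1 U₀ (Icc 0 ubs)) :
    ∃ V : ℝ × ℝ × ℝ → Y, ContinuousOn V (Icc 0 us ×ˢ Icc 0 ubs ×ˢ Icc 0 ubs) ∧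
      ∀ v ∈ Icc 0 ubs, ∀ w ∈ Icc 0 ubs,
        V (0, v, w) = segmentAverage (fderivWithin ℝ U₀ (Icc 0 ubs)) v w 1 ∧
        ∀ t ∈ Icc 0 us, HasDerivWithinAt (fun s => V (s, v, w))
          (meanFDeriv G' U (t, v, w) (1, V (t, v, w))) (Icc 0 us) t := by
  have hmean := continuousOn_meanFDeriv hG' hU
  have hU₀' : ContinuousOn (fderivWithin ℝ U₀ (Icc 0 ubs)) (Icc 0 ubs) :=
    hU₀.continuousOn_fderivWithin (uniqueDiffOn_Icc hubs) le_rfl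
  obtain ⟨V, hVc, hV0, hV⟩ := exists_continuousOn_hasDerivWithinAt_linear
    (isCompact_Icc.prod isCompact_Icc) hus
    (hmean.clm_comp (continuousOn_const (c := ContinuousLinearMap.inr ℝ ℝ Y)))
    (hmean.clm_apply (continuousOn_const (c := ((1, 0) : ℝ × Y))))
    ((continuousOn_segmentAverage (convex_Icc 0 ubs) hU₀').clm_apply
      (continuousOn_const (c := (1 : ℝ))))
  refine ⟨V, hVc, fun v hv w hw => ⟨hV0 (v, w) ⟨hv, hw⟩, fun t ht => ?_⟩⟩
  refine (hV (v, w) ⟨hv, hw⟩ t ht).congr_deriv ?_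
  rw [ContinuousLinearMap.comp_apply, ContinuousLinearMap.inr_apply, ← map_add, Prod.mk_add_mk,
    zero_add, add_zero]

namespace IsParametricSolution

/-- Both sides solve the same linear equation in `t`, with the same initial value. -/
theorem sub_eq_smul_dividedDifference (hU : IsParametricSolution us ubs G U₀ U) (hubs : 0 < ubs)
    (hG : HasParametricFDerivOn us ubs G G') (hG' : ContinuousOn G' (Dset us ubs ×ˢ univ))
    (hU₀ : ContDiffOn ℝ 1 U₀ (Icc 0 ubs)) {v w : ℝ} (hv : v ∈ Icc 0 ubs) (hw : w ∈ Icc 0 ubs)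
    {V : ℝ → Y} (hV0 : V 0 = segmentAverage (fderivWithin ℝ U₀ (Icc 0 ubs)) v w 1)
    (hV : ∀ t ∈ Icc 0 us,
      HasDerivWithinAt V (meanFDeriv G' U (t, v, w) (1, V t)) (Icc 0 us) t) :
    EqOn (fun t => U (t, w) - U (t, v)) (fun t => (w - v) • V t) (Icc 0 us) := by
  have hmean : ContinuousOn (fun t => meanFDeriv G' U (t, v, w)) (Icc 0 us) :=
    (continuousOn_meanFDeriv hG' hU.continuousOn).comp (by fun_prop) fun t ht => ⟨ht, hv, hw⟩
  have hsplit (t : ℝ) (y : Y) : meanFDeriv G' U (t, v, w) (w - v, y)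
      = (meanFDeriv G' U (t, v, w)).comp (.inr ℝ ℝ Y) y
        + meanFDeriv G' U (t, v, w) (w - v, 0) := by
    rw [ContinuousLinearMap.comp_apply, ContinuousLinearMap.inr_apply, ← map_add, Prod.mk_add_mk,
      zero_add, add_zero]
  refine eqOn_of_hasDerivWithinAt_linear (b := fun t => meanFDeriv G' U (t, v, w) (w - v, 0))
    (hmean.clm_comp (continuousOn_const (c := .inr ℝ ℝ Y))) (fun t ht => ?_) (fun t ht => ?_) ?_
  · rw [← hsplit, ← hG.sub_eq_meanFDeriv_apply hG' ht hv hw]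
    exact (hU.hasDerivWithinAt (t, w) ⟨ht, hw⟩).sub (hU.hasDerivWithinAt (t, v) ⟨ht, hv⟩)
  · rw [← hsplit]
    refine ((hV t ht).const_smul (w - v)).congr_deriv ?_
    rw [← map_smul, Prod.smul_mk, smul_eq_mul, mul_one]
  · have hU₀_deriv : ∀ x ∈ Icc 0 ubs,
        HasFDerivWithinAt U₀ (fderivWithin ℝ U₀ (Icc 0 ubs) x) (Icc 0 ubs) x := fun x hx =>
      (hU₀.differentiableOn one_ne_zero x hx).hasFDerivWithinAt
    rw [hU.initial w hw, hU.initial v hv, hV0, ← map_smul, smul_eq_mul, mul_one]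
    exact image_sub_eq_segmentAverage_apply (convex_Icc 0 ubs) hU₀_deriv
      (hU₀.continuousOn_fderivWithin (uniqueDiffOn_Icc hubs) le_rfl) hv hw

theorem exists_hasDerivWithinAt_param (hU : IsParametricSolution us ubs G U₀ U) (hus : 0 ≤ us)
    (hubs : 0 < ubs) (hG : HasParametricFDerivOn us ubs G G')
    (hG' : ContinuousOn G' (Dset us ubs ×ˢ univ)) (hU₀ : ContDiffOn ℝ 1 U₀ (Icc 0 ubs)) :
    ∃ V : ℝ × ℝ → Y, IsParametricSolution us ubs (fun q => G' (q.1, U q.1) (1, q.2))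
        (derivWithin U₀ (Icc 0 ubs)) V ∧
      ∀ p ∈ Dset us ubs, HasDerivWithinAt (fun v => U (p.1, v)) (V p) (Icc 0 ubs) p.2 := by
  obtain ⟨V, hVc, hV⟩ := exists_dividedDifference hus hubs hU.continuousOn hG' hU₀
  have hdiag : MapsTo (fun p : ℝ × ℝ => (p.1, p.2, p.2)) (Dset us ubs)
    (Icc 0 us ×ˢ Icc 0 ubs ×ˢ Icc 0 ubs) := fun p hp => ⟨hp.1, hp.2, hp.2⟩
  refine ⟨fun p => V (p.1, p.2, p.2), ⟨hVc.comp (by fun_prop) hdiag, fun p hp => ?_,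
    fun v hv => ?_⟩, fun p hp => ?_⟩
  · simpa only [meanFDeriv_self] using (hV p.2 hp.2 p.2 hp.2).2 p.1 hp.1
  · rw [(hV v hv v hv).1, segmentAverage_self, fderivWithin_derivWithin]
  · refine hasDerivWithinAt_of_sub_eq_smul (φ := fun w => V (p.1, p.2, w)) (fun w hw => ?_) ?_
    · exact hU.sub_eq_smul_dividedDifference hubs hG hG' hU₀ hp.2 hw (hV p.2 hp.2 w hw).1
        (hV p.2 hp.2 w hw).2 hp.1
    · exact ContinuousWithinAt.comp (t := Icc 0 us ×ˢ Icc 0 ubs ×ˢ Icc 0 ubs)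
        (hVc (p.1, p.2, p.2) (hdiag hp)) (by fun_prop) fun w hw => ⟨hp.1, hp.2, hw⟩

end IsParametricSolution

end ParametricODE

theorem contDiffOn_succ_of_partial {Y : Type*} [NormedAddCommGroup Y] [NormedSpace ℝ Y]
    {s t : Set ℝ} (hs : UniqueDiffOn ℝ s) (ht : UniqueDiffOn ℝ t) (htc : Convex ℝ t)
    {f f₁ f₂ : ℝ × ℝ → Y} {n : ℕ} (hf₁ : ContDiffOn ℝ n f₁ (s ×ˢ t))
    (hf₂ : ContDiffOn ℝ n f₂ (s ×ˢ t))
    (hff₁ : ∀ p ∈ s ×ˢ t, HasDerivWithinAt (fun x => f (x, p.2)) (f₁ p) s p.1)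
    (hff₂ : ∀ p ∈ s ×ˢ t, HasDerivWithinAt (fun y => f (p.1, y)) (f₂ p) t p.2) :
    ContDiffOn ℝ (n + 1) f (s ×ˢ t) := by
  let span : Y ≃L[ℝ] ℝ →L[ℝ] Y := ContinuousLinearMap.toSpanSingletonCLE
  have hspan {g : ℝ × ℝ → Y} (hg : ContDiffOn ℝ n g (s ×ˢ t)) :
      ContDiffOn ℝ n (fun p => span (g p)) (s ×ˢ t) := span.contDiff.comp_contDiffOn hg
  rw [contDiffOn_succ_iff_hasFDerivWithinAt_of_uniqueDiffOn (hs.prod ht)]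
  refine ⟨fun hω => absurd hω (WithTop.natCast_ne_top n),
    fun p => (span (f₁ p)).coprod (span (f₂ p)), ?_, fun p hp => ?_⟩
  · exact (ContinuousLinearMap.coprodEquivL ℝ).contDiff.comp_contDiffOn
      ((hspan hf₁).prodMk (hspan hf₂))
  · exact hasFDerivWithinAt_of_partial htc hp.2 (hff₁ p hp).hasFDerivWithinAt
      (fun q hq => (hff₂ q hq).hasFDerivWithinAt) ((hspan hf₂).continuousOn p hp)

section SmoothDependence

variable {Y : Type*} [NormedAddCommGroup Y] [NormedSpace ℝ Y] {us ubs : ℝ}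
  {G : (ℝ × ℝ) × Y → Y} {G' : (ℝ × ℝ) × Y → ℝ × Y →L[ℝ] Y} {U₀ : ℝ → Y} {U : ℝ × ℝ → Y}

theorem uniqueDiffOn_Dset_prod_univ (hus : 0 < us) (hubs : 0 < ubs) :
    UniqueDiffOn ℝ (Dset us ubs ×ˢ (univ : Set Y)) :=
  ((uniqueDiffOn_Icc hus).prod (uniqueDiffOn_Icc hubs)).prod uniqueDiffOn_univ

theorem HasParametricFDerivOn.exists_contDiffOn_comp {E Z : Type*} [NormedAddCommGroup E]
    [NormedSpace ℝ E] [NormedAddCommGroup Z] [NormedSpace ℝ Z] {S : Set E} (hS : UniqueDiffOn ℝ S)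
    {H : E → Z} {n : ℕ} (hH : ContDiffOn ℝ (n + 1) H S) {Φ : (ℝ × ℝ) × Y → E}
    {Φ' : (ℝ × ℝ) × Y → ℝ × Y →L[ℝ] E} (hΦ : HasParametricFDerivOn us ubs Φ Φ')
    (hΦn : ContDiffOn ℝ n Φ (Dset us ubs ×ˢ univ)) (hΦ'n : ContDiffOn ℝ n Φ' (Dset us ubs ×ˢ univ))
    (hΦS : MapsTo Φ (Dset us ubs ×ˢ univ) S) :
    ∃ G', HasParametricFDerivOn us ubs (H ∘ Φ) G' ∧ ContDiffOn ℝ n G' (Dset us ubs ×ˢ univ) := by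
  refine ⟨fun q => (fderivWithin ℝ H S (Φ q)).comp (Φ' q), fun p hp y => ?_,
    ((hH.fderivWithin hS le_rfl).comp hΦn hΦS).clm_comp hΦ'n⟩
  have hHp := (hH.differentiableOn (by simp) (Φ (p, y)) (hΦS ⟨hp, mem_univ y⟩)).hasFDerivWithinAt
  have hslice : MapsTo (fun z : ℝ × Y => Φ ((p.1, z.1), z.2)) (Icc 0 ubs ×ˢ univ) S :=
    fun z hz => hΦS ⟨⟨hp.1, hz.1⟩, mem_univ z.2⟩
  exact hHp.comp (p.2, y) (hΦ p hp y) hslice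

theorem hasParametricFDerivOn_id : HasParametricFDerivOn us ubs (id : (ℝ × ℝ) × Y → (ℝ × ℝ) × Y)
    fun _ => ((0 : ℝ × Y →L[ℝ] ℝ).prod (.fst ℝ ℝ Y)).prod (.snd ℝ ℝ Y) := fun p _ y =>
  ((hasFDerivWithinAt_const p.1 (p.2, y) _).prodMk hasFDerivWithinAt_fst).prodMk
    hasFDerivWithinAt_snd

theorem contDiffOn_comp_graph {E F Z : Type*} [NormedAddCommGroup E] [NormedSpace ℝ E]
    [NormedAddCommGroup F] [NormedSpace ℝ F] [NormedAddCommGroup Z] [NormedSpace ℝ Z] {s : Set E}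
    {n : WithTop ℕ∞} {G : E × F → Z} {U : E → F}
    (hG : ContDiffOn ℝ n G (s ×ˢ univ)) (hU : ContDiffOn ℝ n U s) :
    ContDiffOn ℝ n (fun p => G (p, U p)) s :=
  hG.comp (contDiffOn_id.prodMk hU) fun _ hp => ⟨hp, mem_univ _⟩

theorem contDiffOn_linearized {E : Type*} [NormedAddCommGroup E] [NormedSpace ℝ E] {s : Set E}
    {n : WithTop ℕ∞} {G' : E × Y → ℝ × Y →L[ℝ] Y} {U : E → Y} (hG' : ContDiffOn ℝ n G' (s ×ˢ univ))
    (hU : ContDiffOn ℝ n U s) :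
    ContDiffOn ℝ n (fun q : E × Y => G' (q.1, U q.1) (1, q.2)) (s ×ˢ univ) :=
  ((contDiffOn_comp_graph hG' hU).comp contDiffOn_fst fun _ hq => hq.1).clm_apply
    (contDiffOn_const.prodMk contDiffOn_snd)

theorem IsParametricSolution.contDiffOn_succ [CompleteSpace Y] (hus : 0 < us) (hubs : 0 < ubs)
    {n : ℕ} (hU : IsParametricSolution us ubs G U₀ U) (hG : HasParametricFDerivOn us ubs G G')
    (hGn : ContDiffOn ℝ n G (Dset us ubs ×ˢ univ)) (hG'n : ContDiffOn ℝ n G' (Dset us ubs ×ˢ univ))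
    (hU₀ : ContDiffOn ℝ (n + 1) U₀ (Icc 0 ubs)) : ContDiffOn ℝ (n + 1) U (Dset us ubs) := by
  induction n generalizing G G' U₀ U with
  | zero =>
    obtain ⟨V, hV, hUV⟩ := hU.exists_hasDerivWithinAt_param hus.le hubs hG hG'n.continuousOn
      (by simpa using hU₀)
    exact contDiffOn_succ_of_partial (uniqueDiffOn_Icc hus) (uniqueDiffOn_Icc hubs)
      (convex_Icc 0 ubs) (contDiffOn_comp_graph hGn (contDiffOn_zero.2 hU.continuousOn))
      (contDiffOn_zero.2 hV.continuousOn) hU.hasDerivWithinAt hUV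
  | succ n ih =>
    push_cast at hGn hG'n hU₀ ⊢
    have hUn := ih hU hG hGn.of_succ hG'n.of_succ hU₀.of_succ
    obtain ⟨V, hV, hUV⟩ := hU.exists_hasDerivWithinAt_param hus.le hubs hG hG'n.continuousOn
      (hU₀.of_le le_add_self)
    have hlin := contDiffOn_linearized hG'n hUn
    obtain ⟨H', hH, hH'n⟩ := hasParametricFDerivOn_id.exists_contDiffOn_comp
      (uniqueDiffOn_Dset_prod_univ hus hubs) hlin contDiffOn_id contDiffOn_const (mapsTo_id _)
    have hVn := ih hV hH hlin.of_succ hH'n (hU₀.derivWithin (uniqueDiffOn_Icc hubs) le_rfl)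
    exact contDiffOn_succ_of_partial (uniqueDiffOn_Icc hus) (uniqueDiffOn_Icc hubs)
      (convex_Icc 0 ubs) (n := n + 1) (contDiffOn_comp_graph hGn hUn) hVn hU.hasDerivWithinAt hUV

end SmoothDependence

theorem contDiffOn_comp_swap_Dset {Z : Type*} [NormedAddCommGroup Z] [NormedSpace ℝ Z] {us ubs : ℝ}
    {n : WithTop ℕ∞} {f : ℝ × ℝ → Z} (hf : ContDiffOn ℝ n f (Dset us ubs)) :
    ContDiffOn ℝ n (f ∘ Prod.swap) (Dset ubs us) :=
  hf.comp (contDiff_snd.prodMk contDiff_fst).contDiffOn fun _ hp => ⟨hp.2, hp.1⟩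

theorem contDiffOn_comp_swap_swap {Y Yb Z : Type*} [NormedAddCommGroup Y] [NormedSpace ℝ Y]
    [NormedAddCommGroup Yb] [NormedSpace ℝ Yb] [NormedAddCommGroup Z] [NormedSpace ℝ Z] {us ubs : ℝ}
    {n : WithTop ℕ∞} {H : (ℝ × ℝ) × Y × Yb → Z} (hH : ContDiffOn ℝ n H (Dset us ubs ×ˢ univ)) :
    ContDiffOn ℝ n (fun q : (ℝ × ℝ) × Yb × Y => H (q.1.swap, q.2.swap)) (Dset ubs us ×ˢ univ) :=
  hH.comp ((contDiff_snd.prodMk contDiff_fst).prodMap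
    (contDiff_snd.prodMk contDiff_fst)).contDiffOn fun _ hq => ⟨⟨hq.1.2, hq.1.1⟩, mem_univ _⟩

/-- The derivative in `(v, y)` of the state `((u, v), y, Ub (u, v))` when `∂Ub/∂v = w`. -/
noncomputable def stateFDeriv (Y : Type*) {Yb : Type*} [NormedAddCommGroup Y] [NormedSpace ℝ Y]
    [NormedAddCommGroup Yb] [NormedSpace ℝ Yb] (w : Yb) : ℝ × Y →L[ℝ] (ℝ × ℝ) × Y × Yb :=
  ((0 : ℝ × Y →L[ℝ] ℝ).prod (.fst ℝ ℝ Y)).prod ((ContinuousLinearMap.snd ℝ ℝ Y).prod 0)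
    + (ContinuousLinearMap.fst ℝ ℝ Y).smulRight (0, 0, w)

theorem contDiff_stateFDeriv (Y : Type*) {Yb : Type*} [NormedAddCommGroup Y] [NormedSpace ℝ Y]
    [NormedAddCommGroup Yb] [NormedSpace ℝ Yb] {n : WithTop ℕ∞} :
    ContDiff ℝ n (stateFDeriv Y (Yb := Yb)) :=
  contDiff_const.add (contDiff_const.smulRight
    (contDiff_const.prodMk (contDiff_const.prodMk contDiff_id)))

namespace IsSolution

variable {Y Yb : Type*} [NormedAddCommGroup Y] [NormedSpace ℝ Y] [NormedAddCommGroup Yb]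
  [NormedSpace ℝ Yb] {us ubs : ℝ} {F : ℝ → ℝ → Y × Yb → Y} {Fb : ℝ → ℝ → Y × Yb → Yb}
  {U₀ : ℝ → Y} {Ub₀ : ℝ → Yb} {U : ℝ × ℝ → Y} {Ub : ℝ × ℝ → Yb}

theorem isParametricSolution (h : IsSolution us ubs F Fb U₀ Ub₀ U Ub) :
    IsParametricSolution us ubs (fun q => F q.1.1 q.1.2 (q.2, Ub q.1)) U₀ U := by
  obtain ⟨hUc, -, hU, -, hU₀, -⟩ := h
  exact ⟨hUc, hU, hU₀⟩

theorem swap (h : IsSolution us ubs F Fb U₀ Ub₀ U Ub) :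
    IsSolution ubs us (fun a b x => Fb b a x.swap) (fun a b x => F b a x.swap) Ub₀ U₀
      (Ub ∘ Prod.swap) (U ∘ Prod.swap) := by
  obtain ⟨hUc, hUbc, hU, hUb, hU₀, hUb₀⟩ := h
  have hswap : MapsTo Prod.swap (Dset ubs us) (Dset us ubs) := fun p hp => ⟨hp.2, hp.1⟩
  exact ⟨hUbc.comp continuous_swap.continuousOn hswap, hUc.comp continuous_swap.continuousOn hswap,
    fun p hp => hUb p.swap (hswap hp), fun p hp => hU p.swap (hswap hp), hUb₀, hU₀⟩

theorem hasParametricFDerivOn_state (h : IsSolution us ubs F Fb U₀ Ub₀ U Ub) :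
    HasParametricFDerivOn us ubs (fun q : (ℝ × ℝ) × Y => (q.1, q.2, Ub q.1))
      fun q => stateFDeriv Y (Fb q.1.1 q.1.2 (U q.1, Ub q.1)) := by
  obtain ⟨-, -, -, hUb, -, -⟩ := h
  intro p hp y
  have hUb_fst : HasFDerivWithinAt (fun z : ℝ × Y => Ub (p.1, z.1))
      ((ContinuousLinearMap.toSpanSingleton ℝ (Fb p.1 p.2 (U p, Ub p))).comp (.fst ℝ ℝ Y))
      (Icc 0 ubs ×ˢ univ) (p.2, y) :=
    HasFDerivWithinAt.comp (g := fun v => Ub (p.1, v)) (f := Prod.fst) (p.2, y)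
      (hUb p hp).hasFDerivWithinAt hasFDerivWithinAt_fst fun z hz => hz.1
  refine (((hasFDerivWithinAt_const p.1 (p.2, y) _).prodMk hasFDerivWithinAt_fst).prodMk
    (hasFDerivWithinAt_snd.prodMk hUb_fst)).congr_fderiv ?_
  ext <;> simp [stateFDeriv]

variable {n : ℕ}

theorem contDiffOn_fst_succ [CompleteSpace Y] (h : IsSolution us ubs F Fb U₀ Ub₀ U Ub)
    (hus : 0 < us) (hubs : 0 < ubs)
    (hF : ContDiffOn ℝ (n + 1) (fun q : (ℝ × ℝ) × Y × Yb => F q.1.1 q.1.2 q.2)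
      (Dset us ubs ×ˢ univ))
    (hFb : ContDiffOn ℝ n (fun q : (ℝ × ℝ) × Y × Yb => Fb q.1.1 q.1.2 q.2) (Dset us ubs ×ˢ univ))
    (hU₀ : ContDiffOn ℝ (n + 1) U₀ (Icc 0 ubs)) (hU : ContDiffOn ℝ n U (Dset us ubs))
    (hUb : ContDiffOn ℝ n Ub (Dset us ubs)) : ContDiffOn ℝ (n + 1) U (Dset us ubs) := by
  have hlift {f : ℝ × ℝ → Yb} (hf : ContDiffOn ℝ n f (Dset us ubs)) :
      ContDiffOn ℝ n (fun q : (ℝ × ℝ) × Y => f q.1) (Dset us ubs ×ˢ univ) :=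
    hf.comp contDiffOn_fst fun _ hq => hq.1
  have hstate : ContDiffOn ℝ n (fun q : (ℝ × ℝ) × Y => (q.1, q.2, Ub q.1)) (Dset us ubs ×ˢ univ) :=
    contDiffOn_fst.prodMk (contDiffOn_snd.prodMk (hlift hUb))
  have hmaps : MapsTo (fun q : (ℝ × ℝ) × Y => (q.1, q.2, Ub q.1)) (Dset us ubs ×ˢ univ)
      (Dset us ubs ×ˢ univ) := fun q hq => ⟨hq.1, mem_univ _⟩
  have hstate' := (contDiff_stateFDeriv Y).comp_contDiffOn
    (hlift (contDiffOn_comp_graph hFb (hU.prodMk hUb)))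
  obtain ⟨G', hG, hG'⟩ := h.hasParametricFDerivOn_state.exists_contDiffOn_comp
    (uniqueDiffOn_Dset_prod_univ hus hubs) hF hstate hstate' hmaps
  exact h.isParametricSolution.contDiffOn_succ hus hubs hG (hF.of_succ.comp hstate hmaps) hG'
    hU₀

theorem contDiffOn [CompleteSpace Y] [CompleteSpace Yb] (h : IsSolution us ubs F Fb U₀ Ub₀ U Ub)
    (hus : 0 < us) (hubs : 0 < ubs)
    (hF : ContDiffOn ℝ n (fun q : (ℝ × ℝ) × Y × Yb => F q.1.1 q.1.2 q.2) (Dset us ubs ×ˢ univ))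
    (hFb : ContDiffOn ℝ n (fun q : (ℝ × ℝ) × Y × Yb => Fb q.1.1 q.1.2 q.2) (Dset us ubs ×ˢ univ))
    (hU₀ : ContDiffOn ℝ n U₀ (Icc 0 ubs)) (hUb₀ : ContDiffOn ℝ n Ub₀ (Icc 0 us)) :
    ContDiffOn ℝ n U (Dset us ubs) ∧ ContDiffOn ℝ n Ub (Dset us ubs) := by
  induction n with
  | zero => exact ⟨contDiffOn_zero.2 h.1, contDiffOn_zero.2 h.2.1⟩
  | succ n ih =>
    push_cast at hF hFb hU₀ hUb₀ ⊢
    obtain ⟨hU, hUb⟩ := ih hF.of_succ hFb.of_succ hU₀.of_succ hUb₀.of_succ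
    refine ⟨h.contDiffOn_fst_succ hus hubs hF hFb.of_succ hU₀ hU hUb, ?_⟩
    have hUb_swap := h.swap.contDiffOn_fst_succ hubs hus (contDiffOn_comp_swap_swap hFb)
      (contDiffOn_comp_swap_swap hF.of_succ) hUb₀ (contDiffOn_comp_swap_Dset hUb)
      (contDiffOn_comp_swap_Dset hU)
    exact contDiffOn_comp_swap_Dset hUb_swap

end IsSolution

theorem stmt_6_general {Y Yb : Type*}
    [NormedAddCommGroup Y] [NormedSpace ℝ Y] [CompleteSpace Y]
    [NormedAddCommGroup Yb] [NormedSpace ℝ Yb] [CompleteSpace Yb]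
    {us ubs : ℝ} (hus : 0 < us) (hubs : 0 < ubs) {n : ℕ∞}
    {F : ℝ → ℝ → Y × Yb → Y} {Fb : ℝ → ℝ → Y × Yb → Yb}
    (hF : ContDiffOn ℝ n (fun q : (ℝ × ℝ) × Y × Yb => F q.1.1 q.1.2 q.2) (Dset us ubs ×ˢ univ))
    (hFb : ContDiffOn ℝ n (fun q : (ℝ × ℝ) × Y × Yb => Fb q.1.1 q.1.2 q.2) (Dset us ubs ×ˢ univ))
    {U₀ : ℝ → Y} {Ub₀ : ℝ → Yb}
    (hU₀ : ContDiffOn ℝ n U₀ (Icc 0 ubs)) (hUb₀ : ContDiffOn ℝ n Ub₀ (Icc 0 us))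
    {U : ℝ × ℝ → Y} {Ub : ℝ × ℝ → Yb} (hsol : IsSolution us ubs F Fb U₀ Ub₀ U Ub) :
    ContDiffOn ℝ n U (Dset us ubs) ∧ ContDiffOn ℝ n Ub (Dset us ubs) := by
  rw [contDiffOn_iff_forall_nat_le] at hF hFb hU₀ hUb₀
  simp only [contDiffOn_iff_forall_nat_le (n := n), ← forall_and]
  intro m hm
  exact hsol.contDiffOn hus hubs (hF m hm) (hFb m hm) (hU₀ m hm) (hUb₀ m hm)

/-- smooth solutions of two-variable ODE systems. If `F, F̄` are
continuous, uniformly Lipschitz in `𝕏`, and smooth (infinitely Fréchet differentiable)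
jointly in all variables, and the initial data `U₀, Ū₀` are smooth, then the (unique)
solution `(U,Ū)` of the two-variable ODE system belongs to `C^∞(D;𝕏)`. -/
theorem stmt_6 {Y Yb : Type*}
    [NormedAddCommGroup Y] [NormedSpace ℝ Y] [CompleteSpace Y]
    [NormedAddCommGroup Yb] [NormedSpace ℝ Yb] [CompleteSpace Yb]
    (us ubs : ℝ) (hus : 0 < us) (hubs : 0 < ubs)
    (F : ℝ → ℝ → Y × Yb → Y) (Fb : ℝ → ℝ → Y × Yb → Yb)
    (hFc : ContinuousOn (fun q : (ℝ × ℝ) × Y × Yb => F q.1.1 q.1.2 q.2)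
      (Dset us ubs ×ˢ univ))
    (hFbc : ContinuousOn (fun q : (ℝ × ℝ) × Y × Yb => Fb q.1.1 q.1.2 q.2)
      (Dset us ubs ×ˢ univ))
    (M : ℝ) (hM : 0 ≤ M)
    (hFlip : ∀ p ∈ Dset us ubs, ∀ x₁ x₂ : Y × Yb,
      ‖F p.1 p.2 x₁ - F p.1 p.2 x₂‖ ≤ M * ‖x₁ - x₂‖)
    (hFblip : ∀ p ∈ Dset us ubs, ∀ x₁ x₂ : Y × Yb,
      ‖Fb p.1 p.2 x₁ - Fb p.1 p.2 x₂‖ ≤ M * ‖x₁ - x₂‖)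
    (hFsm : ContDiffOn ℝ (⊤ : ℕ∞) (fun q : (ℝ × ℝ) × Y × Yb => F q.1.1 q.1.2 q.2)
      (Dset us ubs ×ˢ univ))
    (hFbsm : ContDiffOn ℝ (⊤ : ℕ∞) (fun q : (ℝ × ℝ) × Y × Yb => Fb q.1.1 q.1.2 q.2)
      (Dset us ubs ×ˢ univ))
    (U₀ : ℝ → Y) (Ub₀ : ℝ → Yb)
    (hU₀ : ContDiffOn ℝ (⊤ : ℕ∞) U₀ (Set.Icc 0 ubs))
    (hUb₀ : ContDiffOn ℝ (⊤ : ℕ∞) Ub₀ (Set.Icc 0 us))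
    (U : ℝ × ℝ → Y) (Ub : ℝ × ℝ → Yb)
    (hsol : IsSolution us ubs F Fb U₀ Ub₀ U Ub) :
    ContDiffOn ℝ (⊤ : ℕ∞) U (Dset us ubs) ∧ ContDiffOn ℝ (⊤ : ℕ∞) Ub (Dset us ubs) :=
  stmt_6_general hus hubs hFsm hFbsm hU₀ hUb₀ hsol
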